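/- Let G be a finite simple graph of order n that is both edge-transitive and vertex-transitive. Then for every k ≥ 1, ϑ(K_k □ G) = min{ k·ϑ(G), n } = ϑ_k(G), where K_k □ G is the Cartesian product of the complete graph K_k with G. -/

import Mathlib

open Finset

/-- The sum of the `k` largest eigenvalues (counted with multiplicity) of a
Hermitian real matrix, realized as the supremum over all choices of
`min k n` eigenvalues of their sum. -/
noncomputable def sumKEig {V : Type*} [Fintype V] [DecidableEq V] (k : ℕ)
    (A : Matrix V V ℝ) (hA : A.IsHermitian) : ℝ :=
  sSup {x : ℝ | ∃ s : Finset V, s.card = min k (Fintype.card V) ∧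
    x = ∑ i ∈ s, hA.eigenvalues i}

/-- The generalized theta number `ϑ_k(G)`: the infimum of the sum of the `k`
largest eigenvalues over all real symmetric matrices `A` with `A i j = 1`
whenever `(i,j)` is not an edge of `G`. -/
noncomputable def gtheta {V : Type*} [Fintype V] [DecidableEq V]
    (k : ℕ) (G : SimpleGraph V) : ℝ :=
  sInf {x : ℝ | ∃ (A : Matrix V V ℝ) (hA : A.IsHermitian),
    (∀ i j, ¬ G.Adj i j → A i j = 1) ∧ x = sumKEig k A hA}

/-- A simple graph is edge-transitive if for every two edges there is a graph
automorphism mapping one to the other. -/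
def EdgeTransitive {V : Type*} (G : SimpleGraph V) : Prop :=
  ∀ e ∈ G.edgeSet, ∀ f ∈ G.edgeSet, ∃ φ : G ≃g G, Sym2.map (fun v => φ v) e = f

/-- A simple graph is vertex-transitive if its automorphism group acts
transitively on its vertices. -/
def VertexTransitive {V : Type*} (G : SimpleGraph V) : Prop :=
  ∀ u v : V, ∃ φ : G ≃g G, φ u = v


open Matrix

/-- The all-ones matrix. -/
def onesM (V : Type*) : Matrix V V ℝ := fun _ _ => 1

lemma onesM_apply {V : Type*} (i j : V) : onesM V i j = 1 := rfl

lemma onesM_psd (V : Type*) [Fintype V] : (onesM V).PosSemidef := by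
  have h := Matrix.posSemidef_vecMulVec_self_star (fun _ : V => (1 : ℝ))
  convert h using 1
  ext i j
  simp [onesM, vecMulVec_apply]

lemma psd_iff_quad {V : Type*} [Fintype V] (A : Matrix V V ℝ) :
    A.PosSemidef ↔ A.IsHermitian ∧ ∀ x : V → ℝ, 0 ≤ x ⬝ᵥ (A *ᵥ x) := by
  rw [posSemidef_iff_dotProduct_mulVec]
  simp

lemma exists_diag {V : Type*} [Fintype V] [DecidableEq V] (A : Matrix V V ℝ)
    (hA : A.IsHermitian) :
    ∃ U : Matrix V V ℝ, Uᵀ * U = 1 ∧ U * Uᵀ = 1 ∧ A = U * diagonal hA.eigenvalues * Uᵀ := by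
  refine ⟨hA.eigenvectorUnitary, ?_, ?_, ?_⟩
  · have := Unitary.coe_star_mul_self hA.eigenvectorUnitary
    rwa [star_eq_conjTranspose, conjTranspose_eq_transpose_of_trivial] at this
  · have := Unitary.coe_mul_star_self hA.eigenvectorUnitary
    rwa [Unitary.coe_star, star_eq_conjTranspose, conjTranspose_eq_transpose_of_trivial] at this
  · have := hA.spectral_theorem
    rw [Unitary.conjStarAlgAut_apply, star_eq_conjTranspose,
      conjTranspose_eq_transpose_of_trivial] at this
    exact this

lemma psd_conj {V : Type*} [Fintype V] [DecidableEq V] {X : Matrix V V ℝ} (hX : X.PosSemidef)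
    (U : Matrix V V ℝ) : (Uᵀ * X * U).PosSemidef := by
  have := hX.conjTranspose_mul_mul_same U
  rwa [conjTranspose_eq_transpose_of_trivial] at this

lemma trace_diag_conj {V : Type*} [Fintype V] [DecidableEq V] (U X : Matrix V V ℝ) (d : V → ℝ) :
    (U * diagonal d * Uᵀ * X).trace = ∑ i, d i * (Uᵀ * X * U) i i := by
  rw [Matrix.mul_assoc, Matrix.mul_assoc, Matrix.trace_mul_comm, Matrix.mul_assoc]
  simp [Matrix.trace, diagonal_mul]

lemma trace_mul_psd_nonneg {V : Type*} [Fintype V] [DecidableEq V] {A B : Matrix V V ℝ}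
    (hA : A.PosSemidef) (hB : B.PosSemidef) : 0 ≤ (A * B).trace := by
  obtain ⟨U, h1, h2, h3⟩ := exists_diag A hA.1
  rw [h3, trace_diag_conj]
  exact Finset.sum_nonneg fun i _ => mul_nonneg (hA.eigenvalues_nonneg i) (psd_conj hB U).diag_nonneg

lemma sumKEig_bdd {V : Type*} [Fintype V] [DecidableEq V] (k : ℕ)
    (A : Matrix V V ℝ) (hA : A.IsHermitian) :
    BddAbove {x : ℝ | ∃ s : Finset V, s.card = min k (Fintype.card V) ∧
      x = ∑ i ∈ s, hA.eigenvalues i} := by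
  refine ⟨∑ i, |hA.eigenvalues i|, ?_⟩
  rintro x ⟨s, -, rfl⟩
  calc ∑ i ∈ s, hA.eigenvalues i ≤ ∑ i ∈ s, |hA.eigenvalues i| :=
        Finset.sum_le_sum fun i _ => le_abs_self _
    _ ≤ _ := Finset.sum_le_sum_of_subset_of_nonneg (Finset.subset_univ _) fun _ _ _ => abs_nonneg _

lemma sumKEig_le {V : Type*} [Fintype V] [DecidableEq V] (k : ℕ)
    (A : Matrix V V ℝ) (hA : A.IsHermitian) (c : ℝ)
    (h : ∀ s : Finset V, s.card = min k (Fintype.card V) → ∑ i ∈ s, hA.eigenvalues i ≤ c) :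
    sumKEig k A hA ≤ c := by
  unfold sumKEig
  apply csSup_le
  · obtain ⟨s, hs⟩ := Finset.exists_subset_card_eq (s := (Finset.univ : Finset V))
      (n := min k (Fintype.card V)) (by simp [Finset.card_univ])
    exact ⟨_, s, hs.2, rfl⟩
  · rintro x ⟨s, hs, rfl⟩
    exact h s hs

lemma exists_top_set {V : Type*} [Fintype V] [DecidableEq V] (m : ℕ) (hm : m ≤ Fintype.card V)
    (f : V → ℝ) : ∃ s : Finset V, s.card = m ∧ ∃ t : ℝ, (∀ i ∈ s, t ≤ f i) ∧ ∀ i ∉ s, f i ≤ t := by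
  induction m with
  | zero =>
    refine ⟨∅, rfl, ∑ i, |f i|, by simp, fun i _ => ?_⟩
    exact (le_abs_self _).trans
      (Finset.single_le_sum (f := fun i => |f i|) (fun _ _ => abs_nonneg _) (Finset.mem_univ i))
  | succ m ih =>
    obtain ⟨s, hs, t, h1, h2⟩ := ih (by omega)
    have hne : (sᶜ).Nonempty := by
      rw [← Finset.card_pos, Finset.card_compl]; omega
    obtain ⟨a, ha, hmax⟩ := Finset.exists_max_image sᶜ f hne
    rw [Finset.mem_compl] at ha
    refine ⟨insert a s, by rw [Finset.card_insert_of_notMem ha, hs], f a, ?_, ?_⟩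
    · intro i hi
      rcases Finset.mem_insert.1 hi with rfl | hi
      · exact le_rfl
      · exact (h2 a ha).trans (h1 i hi)
    · intro i hi
      rw [Finset.mem_insert, not_or] at hi
      exact hmax i (Finset.mem_compl.2 hi.2)

lemma sum_le_sumKEig {V : Type*} [Fintype V] [DecidableEq V] (k : ℕ)
    (A : Matrix V V ℝ) (hA : A.IsHermitian) (x : V → ℝ) (h0 : ∀ i, 0 ≤ x i) (h1 : ∀ i, x i ≤ 1)
    (hs : ∑ i, x i = (min k (Fintype.card V) : ℕ)) :
    ∑ i, hA.eigenvalues i * x i ≤ sumKEig k A hA := by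
  obtain ⟨s, hc, t, ht1, ht2⟩ := exists_top_set (min k (Fintype.card V)) (min_le_right _ _)
    hA.eigenvalues
  refine le_trans ?_ (le_csSup (sumKEig_bdd k A hA) ⟨s, hc, rfl⟩)
  have e1 : ∑ i, hA.eigenvalues i * x i = ∑ i, (hA.eigenvalues i - t) * x i + t * ∑ i, x i := by
    rw [Finset.mul_sum, ← Finset.sum_add_distrib]
    exact Finset.sum_congr rfl fun i _ => by ring
  have e2 : ∑ i ∈ s, hA.eigenvalues i
      = ∑ i, (if i ∈ s then hA.eigenvalues i - t else 0) + t * s.card := by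
    rw [Finset.sum_ite_mem, Finset.univ_inter, Finset.sum_sub_distrib]
    simp; ring
  rw [e1, e2, hs, hc]
  gcongr with i
  split_ifs with h
  · nlinarith [ht1 i h, h1 i]
  · nlinarith [ht2 i h, h0 i]

lemma trace_le_sumKEig {V : Type*} [Fintype V] [DecidableEq V] (k : ℕ)
    (A : Matrix V V ℝ) (hA : A.IsHermitian) (X : Matrix V V ℝ) (hX : X.PosSemidef)
    (hX1 : (1 - X).PosSemidef) (ht : X.trace = (min k (Fintype.card V) : ℕ)) :
    (A * X).trace ≤ sumKEig k A hA := by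
  obtain ⟨U, h1, h2, h3⟩ := exists_diag A hA
  have h4 := trace_diag_conj U X hA.eigenvalues
  rw [← h3] at h4
  rw [h4]
  apply sum_le_sumKEig
  · intro i; exact (psd_conj hX U).diag_nonneg
  · intro i
    have := (psd_conj hX1 U).diag_nonneg (i := i)
    rw [Matrix.mul_sub, Matrix.sub_mul, Matrix.mul_one, h1] at this
    simp at this
    linarith
  · rw [← ht]
    change (Uᵀ * X * U).trace = _
    rw [Matrix.mul_assoc, Matrix.trace_mul_comm, Matrix.mul_assoc, h2, Matrix.mul_one]

lemma trace_le_sumKEig_one {V : Type*} [Fintype V] [DecidableEq V] [Nonempty V]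
    (A : Matrix V V ℝ) (hA : A.IsHermitian) (X : Matrix V V ℝ) (hX : X.PosSemidef)
    (ht : X.trace = 1) :
    (A * X).trace ≤ sumKEig 1 A hA := by
  obtain ⟨U, h1, h2, h3⟩ := exists_diag A hA
  have h4 := trace_diag_conj U X hA.eigenvalues
  rw [← h3] at h4
  rw [h4]
  have hs : ∑ i, (Uᵀ * X * U) i i = 1 := by
    rw [← ht]
    change (Uᵀ * X * U).trace = _
    rw [Matrix.mul_assoc, Matrix.trace_mul_comm, Matrix.mul_assoc, h2, Matrix.mul_one]
  have h0 : ∀ i, 0 ≤ (Uᵀ * X * U) i i := fun i => (psd_conj hX U).diag_nonneg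
  apply sum_le_sumKEig
  · exact h0
  · intro i
    rw [← hs]
    exact Finset.single_le_sum (f := fun i => (Uᵀ * X * U) i i) (fun j _ => h0 j)
      (Finset.mem_univ i)
  · rw [hs, min_eq_left]
    · simp
    · exact Fintype.card_pos

lemma eig_le_of_psd {V : Type*} [Fintype V] [DecidableEq V]
    (A : Matrix V V ℝ) (hA : A.IsHermitian) (c : ℝ) (h : (c • (1 : Matrix V V ℝ) - A).PosSemidef)
    (i : V) : hA.eigenvalues i ≤ c := by
  obtain ⟨U, h1, h2, h3⟩ := exists_diag A hA
  have := (psd_conj h U).diag_nonneg (i := i)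
  have e : Uᵀ * A * U = diagonal hA.eigenvalues := by
    conv_lhs => rw [h3]
    calc _ = (Uᵀ * U) * diagonal hA.eigenvalues * (Uᵀ * U) := by simp only [Matrix.mul_assoc]
      _ = _ := by rw [h1]; simp
  rw [Matrix.mul_sub, Matrix.sub_mul, e] at this
  simp [h1] at this
  exact this

lemma psd_of_le_eig {V : Type*} [Fintype V] [DecidableEq V]
    (A : Matrix V V ℝ) (hA : A.IsHermitian) (c : ℝ) (h : ∀ i, c ≤ hA.eigenvalues i) :
    (A - c • (1 : Matrix V V ℝ)).PosSemidef := by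
  obtain ⟨U, h1, h2, h3⟩ := exists_diag A hA
  have hd : (diagonal (fun i => hA.eigenvalues i - c)).PosSemidef :=
    PosSemidef.diagonal fun i => sub_nonneg.2 (h i)
  have := psd_conj hd Uᵀ
  convert this using 1
  have : diagonal (fun i => hA.eigenvalues i - c) = diagonal hA.eigenvalues - c • 1 := by
    ext i j
    by_cases hij : i = j <;> simp [hij]
  rw [this, Matrix.mul_sub, Matrix.sub_mul, transpose_transpose, ← h3]
  simp [h2]

lemma sumKEig_le_mul {V : Type*} [Fintype V] [DecidableEq V] (k : ℕ)
    (A : Matrix V V ℝ) (hA : A.IsHermitian) (c : ℝ) (hc : 0 ≤ c)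
    (h : (c • (1 : Matrix V V ℝ) - A).PosSemidef) :
    sumKEig k A hA ≤ k * c := by
  apply sumKEig_le
  intro s hs
  calc ∑ i ∈ s, hA.eigenvalues i ≤ ∑ i ∈ s, c :=
        Finset.sum_le_sum fun i _ => eig_le_of_psd A hA c h i
    _ = s.card * c := by simp
    _ ≤ k * c := by
      gcongr
      rw [hs]; exact min_le_left _ _

lemma sumKEig_le_trace {V : Type*} [Fintype V] [DecidableEq V] (k : ℕ)
    (A : Matrix V V ℝ) (hA : A.PosSemidef) :
    sumKEig k A hA.1 ≤ A.trace := by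
  apply sumKEig_le
  intro s hs
  have := hA.1.trace_eq_sum_eigenvalues
  rw [this]
  exact Finset.sum_le_sum_of_subset_of_nonneg (Finset.subset_univ _)
    fun i _ _ => hA.eigenvalues_nonneg i

/-- A Cauchy--Schwarz argument: subtracting the all-ones part. -/
lemma psd_sub_ones {V : Type*} [Fintype V] [DecidableEq V] [Nonempty V]
    (N : Matrix V V ℝ) (hN : N.PosSemidef) (μ : ℝ)
    (h : ∀ i, ∑ j, N i j = μ) : (N - (μ / Fintype.card V) • onesM V).PosSemidef := by
  have hn : (0 : ℝ) < Fintype.card V := by exact_mod_cast Fintype.card_pos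
  set n : ℝ := ((Fintype.card V : ℕ) : ℝ) with hnd
  have hP := psd_conj hN (1 - (1 / n) • onesM V)
  convert hP using 1
  have hsym : ∀ i j, N i j = N j i := fun i j => by
    have := congrFun (congrFun hN.1 j) i
    simpa using this
  have e1 : N * onesM V = μ • onesM V := by
    ext i j; simp [Matrix.mul_apply, onesM, h]
  have e2 : onesM V * N = μ • onesM V := by
    ext i j
    simp only [Matrix.mul_apply, onesM, one_mul, Matrix.smul_apply, smul_eq_mul, mul_one]
    rw [← h j]
    exact Finset.sum_congr rfl fun l _ => hsym _ _
  have e3 : onesM V * onesM V = n • onesM V := by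
    ext i j; simp [Matrix.mul_apply, onesM, hnd]
  have e4 : (onesM V)ᵀ = onesM V := by ext i j; rfl
  rw [transpose_sub, transpose_smul, e4, transpose_one, Matrix.sub_mul, Matrix.mul_sub,
    Matrix.sub_mul]
  simp only [Matrix.sub_mul, Matrix.one_mul, Matrix.mul_one, Matrix.smul_mul, Matrix.mul_smul, e1, e2, e3,
    smul_smul]
  ext i j
  simp [onesM]
  field_simp
  ring

lemma exists_eigenproj {V : Type*} [Fintype V] [DecidableEq V] [Nonempty V]
    (M : Matrix V V ℝ) (hM : M.IsHermitian) :
    ∃ (l : ℝ) (E : Matrix V V ℝ), (M - l • (1 : Matrix V V ℝ)).PosSemidef ∧ E.PosSemidef ∧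
      (1 - E).PosSemidef ∧ M * E = l • E ∧ E * E = E ∧ E ≠ 0 ∧
      ∀ P : Matrix V V ℝ, P * M = M * P → P * E = E * P := by
  obtain ⟨i0, hi0⟩ := Finite.exists_min hM.eigenvalues
  obtain ⟨U, h1, h2, h3⟩ := exists_diag M hM
  set l := hM.eigenvalues i0 with hl
  set e : V → ℝ := fun i => if hM.eigenvalues i = l then 1 else 0 with he
  have c1 : ∀ X : Matrix V V ℝ, Uᵀ * (U * X) = X := fun X => by
    rw [← Matrix.mul_assoc, h1, Matrix.one_mul]
  have c2 : ∀ X : Matrix V V ℝ, U * (Uᵀ * X) = X := fun X => by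
    rw [← Matrix.mul_assoc, h2, Matrix.one_mul]
  refine ⟨l, U * diagonal e * Uᵀ, psd_of_le_eig M hM l hi0, ?_, ?_, ?_, ?_, ?_, ?_⟩
  · have : (diagonal e).PosSemidef := PosSemidef.diagonal fun i => by
      simp only [he, Pi.zero_apply]; split_ifs <;> norm_num
    simpa using psd_conj this Uᵀ
  · have : (diagonal (fun i => 1 - e i)).PosSemidef := PosSemidef.diagonal fun i => by
      simp only [he, Pi.zero_apply]; split_ifs <;> norm_num
    have h := psd_conj this Uᵀ
    have e' : diagonal (fun i => 1 - e i) = 1 - diagonal e := by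
      rw [← diagonal_one, diagonal_sub]
    rw [e', transpose_transpose, Matrix.mul_sub, Matrix.sub_mul, Matrix.mul_one, h2] at h
    exact h
  · conv_lhs => rw [h3]
    simp only [Matrix.mul_assoc, c1]
    rw [← Matrix.mul_assoc (diagonal _), diagonal_mul_diagonal]
    have : diagonal (fun i => hM.eigenvalues i * e i) = l • diagonal e := by
      rw [← diagonal_smul]
      congr 1
      ext i
      simp only [he, Pi.smul_apply, smul_eq_mul]
      split_ifs with h
      · rw [h]
      · simp
    rw [this]
    simp
  · simp only [Matrix.mul_assoc, c1]
    rw [← Matrix.mul_assoc (diagonal _), diagonal_mul_diagonal]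
    congr 3
    ext i
    simp only [he]
    split_ifs <;> simp
  · intro h
    have h' : Uᵀ * (U * diagonal e * Uᵀ) * U = diagonal e := by
      simp only [Matrix.mul_assoc, c1, h1, Matrix.mul_one]
    rw [h] at h'
    have := congrFun (congrFun h' i0) i0
    simp [he, hl] at this
  · intro P hP
    set Q := Uᵀ * P * U with hQ
    have hPQ : P = U * Q * Uᵀ := by
      simp only [hQ, Matrix.mul_assoc, c2, h2, Matrix.mul_one]
    have hD : diagonal hM.eigenvalues = Uᵀ * M * U := by
      conv_rhs => rw [h3]
      simp only [Matrix.mul_assoc, c1, h1, Matrix.mul_one]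
    have hcomm : Q * diagonal hM.eigenvalues = diagonal hM.eigenvalues * Q := by
      rw [hD, hQ]
      calc Uᵀ * P * U * (Uᵀ * M * U) = Uᵀ * (P * M) * U := by
            simp only [Matrix.mul_assoc, c2]
        _ = Uᵀ * (M * P) * U := by rw [hP]
        _ = _ := by simp only [Matrix.mul_assoc, c2]
    have hcomm2 : Q * diagonal e = diagonal e * Q := by
      ext i j
      have := congrFun (congrFun hcomm i) j
      rw [mul_diagonal, diagonal_mul] at this ⊢
      by_cases hq : Q i j = 0
      · simp [hq]
      · have : hM.eigenvalues i = hM.eigenvalues j := by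
          rw [mul_comm] at this
          exact (mul_right_cancel₀ hq this).symm
        simp only [he, this]
        ring
    rw [hPQ]
    calc U * Q * Uᵀ * (U * diagonal e * Uᵀ) = U * (Q * diagonal e) * Uᵀ := by
          simp only [Matrix.mul_assoc, c1]
      _ = U * (diagonal e * Q) * Uᵀ := by rw [hcomm2]
      _ = _ := by simp only [Matrix.mul_assoc, c1]

lemma perm_inv {V : Type*} [Fintype V] [DecidableEq V]
    (M E : Matrix V V ℝ) (hE : ∀ P : Matrix V V ℝ, P * M = M * P → P * E = E * P)
    (φ : V ≃ V) (hφ : ∀ u v, M (φ u) (φ v) = M u v) (u v : V) : E (φ u) (φ v) = E u v := by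
  obtain ⟨P, hP⟩ : ∃ P : Matrix V V ℝ, ∀ u v, P u v = if φ u = v then 1 else 0 :=
    ⟨fun u v => if φ u = v then 1 else 0, fun _ _ => rfl⟩
  have key : ∀ (X : Matrix V V ℝ) (u v : V),
      (P * X) u v = X (φ u) v := by
    intro X u v
    simp [Matrix.mul_apply, hP]
  have key2 : ∀ (X : Matrix V V ℝ) (u v : V),
      (X * P) u v = X u (φ.symm v) := by
    intro X u v
    simp only [Matrix.mul_apply, hP, mul_ite, mul_one, mul_zero]
    simp [← Equiv.eq_symm_apply]
  have := hE P (by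
    ext a b
    rw [key, key2, ← hφ a (φ.symm b)]; simp)
  have := congrFun (congrFun this u) (φ v)
  rw [key, key2] at this
  simpa using this

lemma key_lemma {V : Type*} [Fintype V] [DecidableEq V] [Nonempty V] (G : SimpleGraph V)
    (het : EdgeTransitive G) (hvt : VertexTransitive G) :
    ∃ (r : ℝ) (Y A : Matrix V V ℝ), 0 ≤ r ∧ Y.PosSemidef ∧ (1 - Y).PosSemidef ∧
      (∀ v, Y v v = r / Fintype.card V) ∧
      (∀ u v, G.Adj u v → Y u v = -1 / Fintype.card V) ∧
      (∀ u, ∑ v, Y u v = 0) ∧ A.IsHermitian ∧ (∀ i j, ¬ G.Adj i j → A i j = 1) ∧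
      (((Fintype.card V : ℝ) / (1 + r)) • (1 : Matrix V V ℝ) - A).PosSemidef := by
  classical
  have hn : (0 : ℝ) < Fintype.card V := by exact_mod_cast Fintype.card_pos
  set n : ℝ := ((Fintype.card V : ℕ) : ℝ) with hnd
  by_cases hedge : ∃ a b, G.Adj a b
  swap
  · push Not at hedge
    refine ⟨0, 0, onesM V, le_rfl, PosSemidef.zero, by simpa using PosSemidef.one, by simp, ?_,
      by simp, (onesM_psd V).1, fun _ _ _ => rfl, ?_⟩
    · intro u v h; exact absurd h (hedge u v)
    · have := psd_sub_ones ((n / (1 + 0)) • (1 : Matrix V V ℝ))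
        (PosSemidef.one.smul (by positivity)) n (by
          intro i; simp [Matrix.one_apply])
      rw [← hnd, div_self hn.ne', one_smul] at this
      exact this
  obtain ⟨a, b, hab⟩ := hedge
  set M : Matrix V V ℝ := G.adjMatrix ℝ with hMd
  have hM : M.IsHermitian := by
    rw [IsHermitian, conjTranspose_eq_transpose_of_trivial]
    exact G.transpose_adjMatrix
  have hMa : ∀ u v, M u v = if G.Adj u v then 1 else 0 := fun u v => by
    rw [hMd, SimpleGraph.adjMatrix_apply]
  obtain ⟨l, E, hl, hE0, hE1, hME, hEE, hEne, hcomm⟩ := exists_eigenproj M hM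
  have hinv : ∀ (φ : G ≃g G) u v, E (φ u) (φ v) = E u v := fun φ u v =>
    perm_inv M E hcomm φ.toEquiv (fun u v => by
      rw [hMa, hMa]
      have : G.Adj (φ.toEquiv u) (φ.toEquiv v) ↔ G.Adj u v := φ.map_adj_iff
      simp only [this]) u v
  have hEs : ∀ u v, E u v = E v u := fun u v => by
    have := congrFun (congrFun hE0.1 v) u
    simpa using this
  -- degrees
  obtain ⟨d, hd⟩ : ∃ d : ℝ, ∀ v, ∑ w, M v w = d := by
    refine ⟨∑ w, M a w, fun v => ?_⟩
    obtain ⟨φ, hφ⟩ := hvt a v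
    rw [← hφ, ← φ.toEquiv.sum_comp]
    refine Finset.sum_congr rfl fun w _ => ?_
    rw [hMa, hMa]
    have : G.Adj (φ a) (φ.toEquiv w) ↔ G.Adj a w := φ.map_adj_iff
    simp only [this]
  have hdpos : 0 < d := by
    rw [← hd a]
    refine Finset.sum_pos' (fun w _ => ?_) ⟨b, Finset.mem_univ _, ?_⟩
    · rw [hMa]; split_ifs <;> norm_num
    · rw [hMa, if_pos hab]; norm_num
  obtain ⟨τ, rfl⟩ : ∃ τ, l = -τ := ⟨-l, by ring⟩
  have hτ : 0 < τ := by
    have h := (psd_iff_quad _).1 hl |>.2 (Pi.single a 1 - Pi.single b 1)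
    have hne := hab.ne
    simp [Matrix.mulVec_sub, sub_dotProduct, dotProduct_sub, hMa, hab, hab.symm, hne, hne.symm] at h
    linarith
  -- diagonal
  obtain ⟨δ, hδ⟩ : ∃ δ : ℝ, ∀ v, E v v = δ := by
    refine ⟨E a a, fun v => ?_⟩
    obtain ⟨φ, hφ⟩ := hvt a v
    rw [← hφ, hinv]
  obtain ⟨ε, hε⟩ : ∃ ε : ℝ, ∀ u v, G.Adj u v → E u v = ε := by
    refine ⟨E a b, fun u v huv => ?_⟩
    obtain ⟨φ, hφ⟩ := het s(a, b) hab s(u, v) huv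
    rw [Sym2.map_mk] at hφ
    rcases Sym2.eq_iff.1 hφ with ⟨h1, h2⟩ | ⟨h1, h2⟩
    · rw [← h1, ← h2]; exact hinv φ _ _
    · rw [← h1, ← h2, hEs]; exact hinv φ _ _
  have hδ0 : 0 < δ := by
    have h0 : 0 ≤ δ := by rw [← hδ a]; exact hE0.diag_nonneg
    rcases h0.lt_or_eq with h | h
    · exact h
    · exfalso; apply hEne
      rw [← hE0.trace_eq_zero_iff]
      simp [Matrix.trace, hδ, ← h]
  have hMX : ∀ (X : Matrix V V ℝ) (x : ℝ), (∀ u v, G.Adj u v → X u v = x) →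
      ∀ v, (M * X) v v = d * x := by
    intro X x hX v
    rw [Matrix.mul_apply, ← hd v, Finset.sum_mul]
    refine Finset.sum_congr rfl fun w _ => ?_
    by_cases h : G.Adj v w
    · rw [hX w v h.symm]
    · rw [hMa, if_neg h]; simp
  have hrel : d * ε = -τ * δ := by
    rw [← hMX E ε hε a, hME]
    simp [hδ]
  have hE1' : ∀ u, ∑ v, E u v = 0 := by
    intro u
    have h1 : ∑ w, (M * E) w u = d * ∑ v, E u v := by
      simp only [Matrix.mul_apply]
      rw [Finset.sum_comm, Finset.mul_sum]
      refine Finset.sum_congr rfl fun x _ => ?_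
      rw [← Finset.sum_mul, hEs u x, ← hd x]
      congr 1
      refine Finset.sum_congr rfl fun w _ => ?_
      rw [hMa, hMa]; simp only [G.adj_comm]
    have h2 : ∑ w, (M * E) w u = -τ * ∑ v, E u v := by
      rw [hME, Finset.mul_sum]
      refine Finset.sum_congr rfl fun x _ => ?_
      rw [hEs u x]; simp
    have : (d + τ) * ∑ v, E u v = 0 := by linarith
    exact (mul_eq_zero.1 this).resolve_left (by positivity)
  -- multiplicity bound
  have hmult : d ≤ n * τ * δ := by
    have hrow : ∀ i, ∑ j, (E ⊙ E) i j = δ := by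
      intro i
      rw [← hδ i]
      conv_rhs => rw [← hEE]
      rw [Matrix.mul_apply]
      refine Finset.sum_congr rfl fun j _ => ?_
      rw [hadamard_apply, hEs j i]
    have hF := psd_sub_ones _ (hE0.hadamard hE0) δ hrow
    rw [← hnd] at hF
    have h := trace_mul_psd_nonneg hl hF
    set F := E ⊙ E - (δ / n) • onesM V with hFd
    have t1 : (M * F).trace = n * (d * (ε ^ 2 - δ / n)) := by
      have : ∀ v, (M * F) v v = d * (ε ^ 2 - δ / n) := hMX F _ (by
        intro u v huv
        simp [hFd, hε u v huv, onesM]; ring)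
      simp [Matrix.trace, this, hnd]
    have t2 : F.trace = n * (δ ^ 2 - δ / n) := by
      have : ∀ v, F v v = δ ^ 2 - δ / n := by
        intro v
        simp [hFd, hδ, onesM]; ring
      simp [Matrix.trace, this, hnd]; ring
    rw [Matrix.sub_mul, Matrix.trace_sub, t1, Matrix.smul_mul, Matrix.one_mul, Matrix.trace_smul,
      t2, smul_eq_mul] at h
    have hε' : ε = -τ * δ / d := by field_simp; linarith
    have h3 : n * (d * (ε ^ 2 - δ / n)) - -τ * (n * (δ ^ 2 - δ / n))
        = (δ / d) * ((n * τ * δ - d) * (τ + d)) := by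
      rw [hε']; field_simp; ring
    rw [h3] at h
    have h4 : 0 ≤ (n * τ * δ - d) * (τ + d) := by
      by_contra hc
      push Not at hc
      have : (δ / d) * ((n * τ * δ - d) * (τ + d)) < 0 := mul_neg_of_pos_of_neg (by positivity) hc
      linarith
    have h5 : 0 ≤ n * τ * δ - d := by
      by_contra hc
      push Not at hc
      have := mul_neg_of_neg_of_pos hc (by positivity : 0 < τ + d)
      linarith
    linarith
  set y := d / (n * τ * δ) with hy
  have hy0 : 0 ≤ y := by positivity
  have hy1 : y ≤ 1 := by rw [hy, div_le_one (by positivity)]; exact hmult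
  refine ⟨d / τ, y • E, onesM V - (n / (d + τ)) • M, by positivity, hE0.smul hy0, ?_, ?_, ?_, ?_,
    ?_, ?_, ?_⟩
  · have := (hE1.smul hy0).add (PosSemidef.one.smul (sub_nonneg.2 hy1) :
      ((1 - y) • (1 : Matrix V V ℝ)).PosSemidef)
    convert this using 1
    module
  · intro v
    rw [Matrix.smul_apply, hδ, smul_eq_mul, hy]
    field_simp
  · intro u v huv
    rw [Matrix.smul_apply, hε u v huv, smul_eq_mul, hy]
    field_simp
    linarith
  · intro u
    simp [← Finset.mul_sum, hE1']
  · refine (onesM_psd V).1.sub ?_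
    rw [IsHermitian, conjTranspose_eq_transpose_of_trivial, transpose_smul]
    congr 1
  · intro i j hij
    simp [hMa, hij, onesM]
  · have h := psd_sub_ones ((n / (d + τ)) • (M - (-τ) • (1 : Matrix V V ℝ)))
      (hl.smul (by positivity)) n (by
        intro i
        simp only [Matrix.smul_apply, Matrix.sub_apply, smul_eq_mul]
        rw [← Finset.mul_sum, Finset.sum_sub_distrib, hd, ← Finset.mul_sum]
        simp [Matrix.one_apply]
        field_simp)
    rw [← hnd, div_self hn.ne', one_smul] at h
    convert h using 1
    have : n / (1 + d / τ) = (n / (d + τ)) * τ := by field_simp; ring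
    rw [this]
    module

lemma gtheta_ge {V : Type*} [Fintype V] [DecidableEq V] (k : ℕ) (G : SimpleGraph V) (c : ℝ)
    (h : ∀ (A : Matrix V V ℝ) (hA : A.IsHermitian), (∀ i j, ¬ G.Adj i j → A i j = 1) →
      c ≤ sumKEig k A hA) : c ≤ gtheta k G := by
  apply le_csInf
  · exact ⟨_, onesM V, (onesM_psd V).1, fun _ _ _ => rfl, rfl⟩
  · rintro x ⟨A, hA, hG, rfl⟩
    exact h A hA hG

lemma gtheta_le {V : Type*} [Fintype V] [DecidableEq V] (k : ℕ) (G : SimpleGraph V) (c b : ℝ)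
    (h : ∀ (A : Matrix V V ℝ) (hA : A.IsHermitian), (∀ i j, ¬ G.Adj i j → A i j = 1) →
      c ≤ sumKEig k A hA)
    (A : Matrix V V ℝ) (hA : A.IsHermitian) (hG : ∀ i j, ¬ G.Adj i j → A i j = 1)
    (hb : sumKEig k A hA ≤ b) : gtheta k G ≤ b := by
  unfold gtheta
  refine le_trans (csInf_le ?_ ⟨A, hA, hG, rfl⟩) hb
  refine ⟨c, ?_⟩
  rintro x ⟨A, hA, hG, rfl⟩
  exact h A hA hG

lemma trace_dual {V : Type*} [Fintype V] (G : SimpleGraph V) (A X : Matrix V V ℝ)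
    (hG : ∀ i j, ¬ G.Adj i j → A i j = 1) (hX : ∀ i j, G.Adj i j → X i j = 0) :
    (A * X).trace = ∑ i, ∑ j, X i j := by
  have hc : ∑ i, ∑ j, X i j = ∑ i, ∑ j, X j i := Finset.sum_comm
  rw [hc]
  simp only [Matrix.trace, Matrix.diag_apply, Matrix.mul_apply]
  refine Finset.sum_congr rfl fun i _ => Finset.sum_congr rfl fun j _ => ?_
  by_cases h : G.Adj i j
  · rw [hX j i h.symm]; simp
  · rw [hG i j h]; simp

lemma theta_k_lower {V : Type*} [Fintype V] [DecidableEq V] [Nonempty V] (G : SimpleGraph V)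
    (k : ℕ) (r : ℝ) (Y : Matrix V V ℝ) (hr : 0 ≤ r) (hY : Y.PosSemidef) (hY1 : (1 - Y).PosSemidef)
    (hd : ∀ v, Y v v = r / Fintype.card V)
    (he : ∀ u v, G.Adj u v → Y u v = -1 / Fintype.card V)
    (hs : ∀ u, ∑ v, Y u v = 0) (A : Matrix V V ℝ) (hA : A.IsHermitian)
    (hG : ∀ i j, ¬ G.Adj i j → A i j = 1) :
    min ((k : ℝ) * (Fintype.card V / (1 + r))) (Fintype.card V) ≤ sumKEig k A hA := by
  have hn : (0 : ℝ) < Fintype.card V := by exact_mod_cast Fintype.card_pos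
  have hkn : ((min k (Fintype.card V) : ℕ) : ℝ) = min (k : ℝ) (Fintype.card V) := by push_cast; rfl
  have htr := fun X h1 h2 h3 => trace_le_sumKEig k A hA X h1 h2 h3
  rw [hkn] at htr
  set n : ℝ := ((Fintype.card V : ℕ) : ℝ) with hnd
  set k' : ℝ := min (k : ℝ) n with hk'
  have hk0 : 0 ≤ k' := by positivity
  have hk1 : k' ≤ n := min_le_right _ _
  set B : Matrix V V ℝ := (1 / n) • onesM V + Y with hB
  have hB0 : B.PosSemidef := ((onesM_psd V).smul (by positivity)).add hY
  have hB1 : (1 - B).PosSemidef := by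
    have := psd_sub_ones _ hY1 1 (by
      intro i
      simp [Finset.sum_sub_distrib, hs, Matrix.one_apply])
    convert this using 1
    rw [hB]; abel
  have hBt : B.trace = 1 + r := by
    have : ∀ v, B v v = (1 + r) / n := by
      intro v; simp [hB, onesM, hd]; ring
    simp only [Matrix.trace, Matrix.diag_apply, this]
    simp [← hnd]
    field_simp
  have hBs : ∑ i, ∑ j, B i j = n := by
    have : ∀ i, ∑ j, B i j = 1 := by
      intro i
      simp [hB, Finset.sum_add_distrib, hs, onesM, ← hnd]
    simp [this, hnd]
  have hBe : ∀ i j, G.Adj i j → B i j = 0 := by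
    intro i j hij
    simp [hB, onesM, he i j hij]; ring
  have hrn : 1 + r ≤ n := by
    have := hB1.trace_nonneg
    rw [Matrix.trace_sub, hBt, Matrix.trace_one] at this
    linarith
  rcases le_or_gt k' (1 + r) with h | h
  · have h1 : k' / (1 + r) ≤ 1 := by rw [div_le_one (by positivity)]; exact h
    have := htr ((k' / (1 + r)) • B) (hB0.smul (by positivity)) (by
      have := (hB1.smul (by positivity : 0 ≤ k' / (1 + r))).add
        (PosSemidef.one.smul (sub_nonneg.2 h1) :
          ((1 - k' / (1 + r)) • (1 : Matrix V V ℝ)).PosSemidef)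
      convert this using 1
      module) (by
      rw [Matrix.trace_smul, hBt, smul_eq_mul]; field_simp)
    refine le_trans ?_ this
    rw [trace_dual G A _ hG (fun i j hij => by simp [hBe i j hij])]
    simp only [Matrix.smul_apply, smul_eq_mul, ← Finset.mul_sum]
    rw [hBs]
    rcases min_choice (k : ℝ) n with h2 | h2
    · rw [hk', h2]
      refine (min_le_left _ _).trans (le_of_eq (by ring))
    · rw [hk', h2]
      refine (min_le_right _ _).trans ?_
      have : 1 ≤ n / (1 + r) := by rw [one_le_div (by positivity)]; exact hrn
      nlinarith
  · have h3 : 0 < n - (1 + r) := by linarith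
    set β := (k' - (1 + r)) / (n - (1 + r)) with hβ
    have hβ0 : 0 ≤ β := div_nonneg (by linarith) h3.le
    have hβ1 : β ≤ 1 := by rw [hβ, div_le_one h3]; linarith
    have := htr ((1 - β) • B + β • 1)
      ((hB0.smul (sub_nonneg.2 hβ1)).add (PosSemidef.one.smul hβ0)) (by
      have := hB1.smul (sub_nonneg.2 hβ1)
      convert this using 1
      module) (by
      rw [Matrix.trace_add, Matrix.trace_smul, Matrix.trace_smul, hBt, Matrix.trace_one,
        smul_eq_mul, smul_eq_mul, ← hnd]
      have : β * (n - (1 + r)) = k' - (1 + r) := by rw [hβ]; field_simp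
      linarith)
    refine le_trans ?_ this
    rw [trace_dual G A _ hG (fun i j hij => by
      simp [hBe i j hij, Matrix.one_apply, hij.ne])]
    refine (min_le_right _ _).trans (le_of_eq ?_)
    simp only [Matrix.add_apply, Matrix.smul_apply, smul_eq_mul, Finset.sum_add_distrib,
      ← Finset.mul_sum]
    rw [hBs]
    simp [Matrix.one_apply, ← hnd]
    ring

open scoped Kronecker

lemma box_dual {V : Type*} [Fintype V] [DecidableEq V] [Nonempty V] (G : SimpleGraph V)
    (k : ℕ) (hk : 1 ≤ k) (P Q : Matrix V V ℝ) (hP : P.PosSemidef)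
    (hPQ : (P + (k : ℝ) • Q).PosSemidef) (hQ : 2 ≤ k → ∀ v, Q v v = 0)
    (he : ∀ u v, G.Adj u v → P u v + Q u v = 0) (hT : 0 < k * (P + Q).trace)
    (A : Matrix (Fin k × V) (Fin k × V) ℝ) (hA : A.IsHermitian)
    (hG : ∀ i j, ¬ (SimpleGraph.boxProd (⊤ : SimpleGraph (Fin k)) G).Adj i j → A i j = 1) :
    (k * (∑ i, ∑ j, P i j) + k ^ 2 * (∑ i, ∑ j, Q i j)) / (k * (P + Q).trace)
      ≤ sumKEig 1 A hA := by
  have : Nonempty (Fin k) := ⟨⟨0, hk⟩⟩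
  have hk0 : (0 : ℝ) < k := by exact_mod_cast hk
  set X : Matrix (Fin k × V) (Fin k × V) ℝ := (1 : Matrix (Fin k) (Fin k) ℝ) ⊗ₖ P
    + onesM (Fin k) ⊗ₖ Q with hX
  have hXa : ∀ i u j v, X (i, u) (j, v) = (if i = j then P u v else 0) + Q u v := by
    intro i u j v
    simp [hX, Matrix.one_apply, onesM]
  have hX0 : X.PosSemidef := by
    have h1 : ((1 : Matrix (Fin k) (Fin k) ℝ) - (1 / (k : ℝ)) • onesM (Fin k)).PosSemidef := by
      have := psd_sub_ones (1 : Matrix (Fin k) (Fin k) ℝ) PosSemidef.one 1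
        (by intro i; simp [Matrix.one_apply])
      simpa using this
    have h2 := (h1.kronecker hP).add
      (((onesM_psd (Fin k)).smul (by positivity : 0 ≤ 1 / (k : ℝ))).kronecker hPQ)
    refine (congrArg Matrix.PosSemidef ?_).mpr h2
    ext ⟨i, u⟩ ⟨j, v⟩
    simp only [hX, Matrix.add_apply, kroneckerMap_apply, Matrix.sub_apply, Matrix.smul_apply,
      onesM_apply, smul_eq_mul]
    field_simp
    ring
  have hXt : X.trace = k * (P + Q).trace := by
    simp only [Matrix.trace, Matrix.diag_apply, Fintype.sum_prod_type, hXa]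
    simp
  have hXs : ∑ i, ∑ j, X i j = k * (∑ i, ∑ j, P i j) + k ^ 2 * (∑ i, ∑ j, Q i j) := by
    simp only [Fintype.sum_prod_type, hXa]
    have : ∀ (i : Fin k) (u : V), ∑ j, ∑ v, ((if i = j then P u v else 0) + Q u v)
        = ∑ v, P u v + k * ∑ v, Q u v := by
      intro i u
      rw [Finset.sum_comm]
      simp [Finset.sum_add_distrib, Finset.mul_sum]
    rw [Finset.sum_congr rfl fun i _ => Finset.sum_congr rfl fun u _ => this i u]
    simp [Finset.sum_add_distrib, ← Finset.mul_sum]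
    ring
  have hXe : ∀ i j, (SimpleGraph.boxProd (⊤ : SimpleGraph (Fin k)) G).Adj i j → X i j = 0 := by
    rintro ⟨i, u⟩ ⟨j, v⟩ h
    rw [SimpleGraph.boxProd_adj] at h
    rw [hXa]
    rcases h with ⟨h1, h2⟩ | ⟨h1, h2⟩
    · simp only [SimpleGraph.top_adj] at h1 h2
      subst h2
      have h2k : 2 ≤ k := by
        by_contra hc
        have : k = 1 := by omega
        subst this
        exact h1 (Subsingleton.elim _ _)
      rw [if_neg h1, hQ h2k, add_zero]
    · simp only at h1 h2
      rw [if_pos h2]; exact he u v h1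
  rw [← hXt, ← hXs]
  rw [← hXt] at hT
  have := trace_le_sumKEig_one A hA ((1 / X.trace) • X) (hX0.smul (by positivity)) (by
    rw [Matrix.trace_smul, smul_eq_mul]; field_simp)
  rw [trace_dual _ A _ hG (fun i j hij => by simp [hXe i j hij])] at this
  simp only [Matrix.smul_apply, smul_eq_mul, ← Finset.mul_sum] at this
  rw [div_eq_inv_mul, ← one_div]
  exact this

lemma box_lower {V : Type*} [Fintype V] [DecidableEq V] [Nonempty V] (G : SimpleGraph V)
    (k : ℕ) (hk : 1 ≤ k) (r : ℝ) (Y : Matrix V V ℝ) (hr : 0 ≤ r) (hY : Y.PosSemidef)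
    (hd : ∀ v, Y v v = r / Fintype.card V)
    (he : ∀ u v, G.Adj u v → Y u v = -1 / Fintype.card V)
    (hs : ∀ u, ∑ v, Y u v = 0) (A : Matrix (Fin k × V) (Fin k × V) ℝ) (hA : A.IsHermitian)
    (hG : ∀ i j, ¬ (SimpleGraph.boxProd (⊤ : SimpleGraph (Fin k)) G).Adj i j → A i j = 1) :
    min ((k : ℝ) * (Fintype.card V / (1 + r))) (Fintype.card V) ≤ sumKEig 1 A hA := by
  have hn : (0 : ℝ) < Fintype.card V := by exact_mod_cast Fintype.card_pos
  have hk0 : (0 : ℝ) < k := by exact_mod_cast hk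
  set n : ℝ := ((Fintype.card V : ℕ) : ℝ) with hnd
  have hYt : Y.trace = r := by
    simp only [Matrix.trace, Matrix.diag_apply, hd]
    simp [← hnd]; field_simp
  have hJt : (onesM V).trace = n := by simp [Matrix.trace, onesM, hnd]
  have hJs : ∑ i, ∑ j, onesM V i j = n ^ 2 := by simp [onesM, ← hnd]; ring
  have hJr : ∀ i, ∑ j, onesM V i j = n := by simp [onesM, ← hnd]
  have h1s : ∀ i, ∑ j, (1 : Matrix V V ℝ) i j = 1 := by simp [Matrix.one_apply]
  by_cases hk1 : k = 1
  · subst hk1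
    have := box_dual G 1 hk 0 (onesM V + n • Y) PosSemidef.zero (by
      simpa using (onesM_psd V).add (hY.smul hn.le)) (by norm_num) (by
        intro u v huv
        simp [onesM, he u v huv]; field_simp; ring) (by
        simp only [zero_add, Matrix.trace_add, Matrix.trace_smul, hYt, hJt, smul_eq_mul]
        simp; positivity) A hA hG
    refine le_trans ((min_le_left _ _).trans (le_of_eq ?_)) this
    simp only [Matrix.add_apply, Matrix.smul_apply, smul_eq_mul, Matrix.zero_apply, zero_add,
      Finset.sum_add_distrib, ← Finset.mul_sum, hs, hJr, Matrix.trace_add, Matrix.trace_smul,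
      hYt, hJt]
    simp [← hnd]
    field_simp
  have hk2 : 2 ≤ k := by omega
  have hk2' : (2 : ℝ) ≤ k := by exact_mod_cast hk2
  rcases le_or_gt ((k : ℝ) - 1) r with h | h
  · have hr0 : 0 < r := by linarith
    have := box_dual G k hk ((n * (1 + r)) • Y) (r • onesM V - n • Y) (hY.smul (by positivity)) (by
        have := ((onesM_psd V).smul (by positivity : 0 ≤ k * r)).add
          (hY.smul (mul_nonneg hn.le (by linarith) : 0 ≤ n * (1 + r - k)))
        convert this using 1
        module) (by
        intro _ v
        simp [onesM, hd]; field_simp; ring) (by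
        intro u v huv
        simp [onesM, he u v huv]; field_simp; ring) (by
        simp only [Matrix.trace_add, Matrix.trace_sub, Matrix.trace_smul, hYt, hJt, smul_eq_mul]
        have : n * (1 + r) * r + (r * n - n * r) = n * (1 + r) * r := by ring
        rw [this]; positivity) A hA hG
    refine le_trans ((min_le_left _ _).trans (le_of_eq ?_)) this
    simp only [Matrix.add_apply, Matrix.sub_apply, Matrix.smul_apply, smul_eq_mul,
      Finset.sum_add_distrib, Finset.sum_sub_distrib, ← Finset.mul_sum, hs, hJr, Matrix.trace_add,
      Matrix.trace_sub, Matrix.trace_smul, hYt, hJt]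
    have : n * (1 + r) * r + (r * n - n * r) = n * (1 + r) * r := by ring
    rw [this]
    simp [← hnd]
    field_simp
  · have := box_dual G k hk ((k : ℝ) • (n • Y + (k - 1 - r) • (1 : Matrix V V ℝ)))
      (((k : ℝ) - 1) • onesM V - n • Y - ((k : ℝ) - 1 - r) • (1 : Matrix V V ℝ))
      (((hY.smul hn.le).add (PosSemidef.one.smul (by linarith))).smul hk0.le) (by
        have := (onesM_psd V).smul (mul_nonneg hk0.le (by linarith) : 0 ≤ (k : ℝ) * (k - 1))
        convert this using 1
        module) (by
        intro _ v
        simp [onesM, hd]; field_simp; ring) (by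
        intro u v huv
        simp [onesM, he u v huv, Matrix.one_apply, huv.ne]; field_simp; ring) (by
        simp only [Matrix.trace_add, Matrix.trace_sub, Matrix.trace_smul, hYt, hJt, smul_eq_mul,
          Matrix.trace_one, ← hnd]
        have : k * (n * r + (k - 1 - r) * n) + ((k - 1) * n - n * r - (k - 1 - r) * n)
          = k * (k - 1) * n := by ring
        rw [this]
        have : (0 : ℝ) < k - 1 := by linarith
        positivity) A hA hG
    refine le_trans ((min_le_right _ _).trans (le_of_eq ?_)) this
    simp only [Matrix.add_apply, Matrix.sub_apply, Matrix.smul_apply, smul_eq_mul,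
      Finset.sum_add_distrib, Finset.sum_sub_distrib, ← Finset.mul_sum, hs, hJr, h1s,
      Matrix.trace_add, Matrix.trace_sub, Matrix.trace_smul, hYt, hJt, Matrix.trace_one, ← hnd]
    have : k * (n * r + (k - 1 - r) * n) + ((k - 1) * n - n * r - (k - 1 - r) * n)
          = k * (k - 1) * n := by ring
    rw [this]
    have : (0 : ℝ) < k - 1 := by linarith
    simp [← hnd]
    field_simp
    ring

lemma gtheta_empty {V : Type*} [Fintype V] [DecidableEq V] [IsEmpty V] (k : ℕ)
    (G : SimpleGraph V) : gtheta k G = 0 := by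
  have h : ∀ (A : Matrix V V ℝ) (hA : A.IsHermitian), sumKEig k A hA = 0 := by
    intro A hA
    unfold sumKEig
    have : {x : ℝ | ∃ s : Finset V, s.card = min k (Fintype.card V) ∧
        x = ∑ i ∈ s, hA.eigenvalues i} = {0} := by
      ext x
      simp only [Set.mem_ofPred_eq, Set.mem_singleton_iff]
      constructor
      · rintro ⟨s, -, rfl⟩
        rw [Finset.eq_empty_of_isEmpty s]; simp
      · rintro rfl
        exact ⟨∅, by simp, by simp⟩
    rw [this, csSup_singleton]
  apply le_antisymm
  · exact gtheta_le k G 0 0 (fun A hA _ => (h A hA).ge) (onesM V) (onesM_psd V).1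
      (fun _ _ _ => rfl) (h _ _).le
  · exact gtheta_ge k G 0 (fun A hA _ => (h A hA).ge)

theorem stmt_13 {V : Type*} [Fintype V] [DecidableEq V] (G : SimpleGraph V)
    (n : ℕ) (hn : Fintype.card V = n)
    (het : EdgeTransitive G) (hvt : VertexTransitive G)
    (k : ℕ) (hk : 1 ≤ k) :
    gtheta 1 (SimpleGraph.boxProd (⊤ : SimpleGraph (Fin k)) G) =
        min ((k : ℝ) * gtheta 1 G) (n : ℝ) ∧
    gtheta k G = min ((k : ℝ) * gtheta 1 G) (n : ℝ) := by
  by_cases hne : Nonempty V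
  swap
  · rw [not_nonempty_iff] at hne
    rw [gtheta_empty, gtheta_empty, gtheta_empty]
    have : n = 0 := by rw [← hn]; simp
    subst this
    simp
  obtain ⟨r, Y, A, hr, hY, hY1, hd, he, hs, hA, hG, hAc⟩ := key_lemma G het hvt
  subst hn
  have hn : (0 : ℝ) < Fintype.card V := by exact_mod_cast Fintype.card_pos
  have hlow := fun k A hA hG => theta_k_lower G k r Y hr hY hY1 hd he hs A hA hG
  have hbox := fun A hA hG => box_lower G k hk r Y hr hY hd he hs A hA hG
  have hk0 : (0 : ℝ) < k := by exact_mod_cast hk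
  have hc0 : (0 : ℝ) ≤ (Fintype.card V : ℝ) / (1 + r) := by positivity
  have hc1 : (Fintype.card V : ℝ) / (1 + r) ≤ Fintype.card V :=
    div_le_self hn.le (by linarith)
  have hth : gtheta 1 G = (Fintype.card V : ℝ) / (1 + r) := by
    apply le_antisymm
    · refine gtheta_le 1 G _ _ (hlow 1) A hA hG ?_
      have := sumKEig_le_mul 1 A hA _ hc0 hAc
      simpa using this
    · refine le_trans (le_of_eq ?_) (gtheta_ge 1 G _ (hlow 1))
      rw [min_eq_left]
      · simp
      · simpa using hc1
  rw [hth]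
  set n : ℝ := ((Fintype.card V : ℕ) : ℝ) with hnd
  set c : ℝ := n / (1 + r) with hcd
  constructor
  · apply le_antisymm
    · apply le_min
      · have hN : ((k : ℝ) • ((1 : Matrix (Fin k) (Fin k) ℝ) ⊗ₖ (c • (1 : Matrix V V ℝ) - A))
            + ((k : ℝ) • (1 : Matrix (Fin k) (Fin k) ℝ) - onesM (Fin k)) ⊗ₖ onesM V).PosSemidef := by
          refine ((PosSemidef.one.kronecker hAc).smul hk0.le).add (PosSemidef.kronecker ?_ (onesM_psd V))
          have : Nonempty (Fin k) := ⟨⟨0, hk⟩⟩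
          have := psd_sub_ones ((k : ℝ) • (1 : Matrix (Fin k) (Fin k) ℝ))
            (PosSemidef.one.smul hk0.le) k (by intro i; simp [Matrix.one_apply])
          rwa [Fintype.card_fin, div_self hk0.ne', one_smul] at this
        have hI : ((k * c) • (1 : Matrix (Fin k × V) (Fin k × V) ℝ)).PosSemidef :=
          PosSemidef.one.smul (by positivity)
        refine gtheta_le 1 _ _ _ hbox _ (hI.1.sub hN.1) ?_ ?_
        · rintro ⟨i, u⟩ ⟨j, v⟩ h
          rw [SimpleGraph.boxProd_adj] at h
          simp only [SimpleGraph.top_adj, not_or, not_and] at h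
          by_cases hij : i = j
          · subst hij
            have h2 := hG u v (fun hh => h.2 hh rfl)
            by_cases huv : u = v
            · subst huv
              simp [onesM, h2]; ring
            · simp [onesM, h2, huv, Matrix.one_apply]
          · simp [onesM, hij, Matrix.one_apply]
        · have := sumKEig_le_mul 1 _ (hI.1.sub hN.1) (k * c) (by positivity) (by
            rw [sub_sub_cancel]; exact hN)
          simpa using this
      · have hN : (onesM (Fin k) ⊗ₖ (n • (1 : Matrix V V ℝ) - onesM V)).PosSemidef := by
          refine (onesM_psd (Fin k)).kronecker ?_
          have := psd_sub_ones (n • (1 : Matrix V V ℝ))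
            (PosSemidef.one.smul hn.le) n (by intro i; simp [Matrix.one_apply])
          rwa [← hnd, div_self hn.ne', one_smul] at this
        have hI : (n • (1 : Matrix (Fin k × V) (Fin k × V) ℝ)).PosSemidef :=
          PosSemidef.one.smul (by positivity)
        refine gtheta_le 1 _ _ _ hbox _ (hI.1.sub hN.1) ?_ ?_
        · rintro ⟨i, u⟩ ⟨j, v⟩ h
          rw [SimpleGraph.boxProd_adj] at h
          simp only [SimpleGraph.top_adj, not_or, not_and] at h
          by_cases huv : u = v
          · have hij : i = j := by
              by_contra hc
              exact h.1 hc huv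
            subst hij huv
            simp [onesM]
          · simp [onesM, huv, Matrix.one_apply]
        · have := sumKEig_le_mul 1 _ (hI.1.sub hN.1) n (by positivity) (by
            rw [sub_sub_cancel]; exact hN)
          simpa using this
    · exact gtheta_ge 1 _ _ hbox
  · apply le_antisymm
    · apply le_min
      · exact gtheta_le k G _ _ (hlow k) A hA hG (sumKEig_le_mul k A hA _ hc0 hAc)
      · refine gtheta_le k G _ _ (hlow k) (onesM V) (onesM_psd V).1 (fun _ _ _ => rfl) ?_
        refine (sumKEig_le_trace k _ (onesM_psd V)).trans (le_of_eq ?_)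
        simp [Matrix.trace, onesM, hnd]
    · exact gtheta_ge k G _ (hlow k)
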